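/- arXiv:1502.06467 — 3 statements merged into one kernel-verified Lean document; each statement's English description precedes it below -/
import Mathlib

section
/- Let L be a first-order language and M a definably well-ordered L-structure. Then M has uniform elimination of imaginaries in the following sense: for every equivalence relation E on M^m whose graph is a subset of M^{2m} definable with parameters, there exists a function f : M^m → M^m whose graph is definable with parameters such that for all x, y ∈ M^m one has (x, f(x)) ∈ E, and (x,y) ∈ E if and only if f(x) = f(y). -/
open FirstOrder FirstOrder.Language

/-- An `L`-structure `M` is definably well-ordered if there is a binary relation `⊲` on `M`,
definable with parameters as a subset of `M²`, which is a strict linear order on `M` such that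
every nonempty subset of `M` definable with parameters has a `⊲`-least element. -/
def FirstOrder.Language.DefinablyWellOrdered (L : FirstOrder.Language) (M : Type*)
    [L.Structure M] : Prop :=
  ∃ r : M → M → Prop,
    (Set.univ : Set M).Definable₂ L {p : M × M | r p.1 p.2} ∧
    (∀ a : M, ¬ r a a) ∧
    (∀ a b c : M, r a b → r b c → r a c) ∧
    (∀ a b : M, a = b ∨ r a b ∨ r b a) ∧
    (∀ s : Set M, (Set.univ : Set M).Definable₁ L s → s.Nonempty →
      ∃ a ∈ s, ∀ b ∈ s, a = b ∨ r a b)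


namespace DWO

open Set

variable {L : FirstOrder.Language} {M : Type*} [L.Structure M]

theorem def_eq_const {α : Type*} (i : α) (a : M) :
    (Set.univ : Set M).Definable L {v : α → M | v i = a} := by
  have := (Definable.singleton_of_mem L (Set.mem_univ a)).preimage_comp (fun _ : Fin 1 => i)
  exact this

theorem def_eq {α : Type*} (i j : α) :
    (Set.univ : Set M).Definable L {v : α → M | v i = v j} := by
  have := (Definable.diagonal L (Set.univ : Set M)).preimage_comp ![i, j]
  exact this

theorem def_rel {r : M → M → Prop}
    (hr : (Set.univ : Set M).Definable₂ L {p : M × M | r p.1 p.2}) {α : Type*} (i j : α) :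
    (Set.univ : Set M).Definable L {v : α → M | r (v i) (v j)} := by
  have := Definable.preimage_comp ![i, j] hr
  exact this

theorem def_forall {α ι : Type*} [Finite ι] {p : ι → (α → M) → Prop}
    (h : ∀ i, (Set.univ : Set M).Definable L {v : α → M | p i v}) :
    (Set.univ : Set M).Definable L {v : α → M | ∀ i, p i v} := by
  have := definable_iInter_of_finite h
  convert this using 1
  ext v; simp

theorem def_exists {α ι : Type*} [Finite ι] {p : ι → (α → M) → Prop}
    (h : ∀ i, (Set.univ : Set M).Definable L {v : α → M | p i v}) :
    (Set.univ : Set M).Definable L {v : α → M | ∃ i, p i v} := by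
  have := definable_iUnion_of_finite h
  convert this using 1
  ext v; simp

/-- lexicographic order -/
def lex {m : ℕ} (r : M → M → Prop) (x y : Fin m → M) : Prop :=
  ∃ i : Fin m, (∀ j : {j : Fin m // j < i}, x j = y j) ∧ r (x i) (y i)

theorem exists_least_aux {r : M → M → Prop}
    (hmin : ∀ s : Set M, (Set.univ : Set M).Definable₁ L s → s.Nonempty →
      ∃ a ∈ s, ∀ b ∈ s, a = b ∨ r a b) {m : ℕ} (S : Set (Fin m → M))
    (hS : (Set.univ : Set M).Definable L S) (hne : S.Nonempty) (k : ℕ) :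
    ∃ y ∈ S, ∀ z ∈ S, (∀ j : Fin m, j.val < k → y j = z j) ∨
      ∃ i : Fin m, i.val < k ∧ (∀ j : Fin m, j < i → y j = z j) ∧ r (y i) (z i) := by
  induction k with
  | zero => exact hne.imp fun y hy => ⟨hy, fun z _ => Or.inl fun j hj => absurd hj (by omega)⟩
  | succ k ih =>
    obtain ⟨y, hy, hyz⟩ := ih
    by_cases hk : k < m
    · have h1 : (Set.univ : Set M).Definable L
          (S ∩ {w : Fin m → M | ∀ j : {j : Fin m // j.val < k}, w j = y j}) :=
        hS.inter (def_forall fun j => def_eq_const _ _)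
      have h2 := h1.image_comp (fun _ : Fin 1 => (⟨k, hk⟩ : Fin m))
      obtain ⟨a, ⟨w, ⟨hwS, hwy⟩, rfl⟩, ha⟩ := hmin
        ((fun w : Fin m → M => w ⟨k, hk⟩) ''
          (S ∩ {w : Fin m → M | ∀ j : {j : Fin m // j.val < k}, w j = y j}))
        (by
          unfold Definable₁
          convert h2 using 1
          ext v
          simp only [Set.mem_image, Set.mem_ofPred_eq]
          refine exists_congr fun w => and_congr_right fun _ => ?_
          constructor
          · intro h; funext i; rw [Subsingleton.elim i 0]; exact h
          · intro h; rw [← h]; rfl)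
        ⟨_, y, ⟨hy, fun _ => rfl⟩, rfl⟩
      have hwy' : ∀ j : Fin m, j.val < k → w j = y j := fun j hj => hwy ⟨j, hj⟩
      refine ⟨w, hwS, fun z hz => ?_⟩
      rcases hyz z hz with h | ⟨i, hik, hi, hr⟩
      · rcases ha (z ⟨k, hk⟩) ⟨z, ⟨hz, fun j => (h j j.2).symm⟩, rfl⟩ with h' | h'
        · left
          intro j hj
          rcases Nat.lt_succ_iff_lt_or_eq.mp hj with hj | hj
          · rw [hwy' j hj, h j hj]
          · have : j = ⟨k, hk⟩ := Fin.ext hj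
            rw [this]; exact h'
        · right
          exact ⟨⟨k, hk⟩, Nat.lt_succ_self k, fun j hj => by rw [hwy' j hj, h j hj], h'⟩
      · right
        refine ⟨i, by omega, fun j hj => ?_, ?_⟩
        · rw [hwy' j (lt_trans hj hik), hi j hj]
        · rw [hwy' i hik]; exact hr
    · refine ⟨y, hy, fun z hz => ?_⟩
      rcases hyz z hz with h | ⟨i, hik, hi⟩
      · exact Or.inl fun j _ => h j (by omega)
      · exact Or.inr ⟨i, by omega, hi⟩

theorem exists_least {r : M → M → Prop}
    (hmin : ∀ s : Set M, (Set.univ : Set M).Definable₁ L s → s.Nonempty →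
      ∃ a ∈ s, ∀ b ∈ s, a = b ∨ r a b) {m : ℕ} (S : Set (Fin m → M))
    (hS : (Set.univ : Set M).Definable L S) (hne : S.Nonempty) :
    ∃ y ∈ S, ∀ z ∈ S, y = z ∨ lex r y z := by
  obtain ⟨y, hy, h⟩ := exists_least_aux hmin S hS hne m
  refine ⟨y, hy, fun z hz => (h z hz).imp (fun h => funext fun j => h j j.2) ?_⟩
  rintro ⟨i, _, h, hr⟩
  exact ⟨i, fun j => h j j.2, hr⟩

theorem lex_asymm {r : M → M → Prop} (hirr : ∀ a : M, ¬ r a a)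
    (htr : ∀ a b c : M, r a b → r b c → r a c) {m : ℕ} {x y : Fin m → M}
    (h : lex r x y) (h' : lex r y x) : False := by
  obtain ⟨i, hi, hr⟩ := h
  obtain ⟨j, hj, hr'⟩ := h'
  rcases lt_trichotomy i j with hij | rfl | hij
  · rw [hj ⟨i, hij⟩] at hr; exact hirr _ hr
  · exact hirr _ (htr _ _ _ hr hr')
  · rw [hi ⟨j, hij⟩] at hr'; exact hirr _ hr'

end DWO

/-- A definably well-ordered structure has uniform elimination of imaginaries: for every
definable equivalence relation `E` on `M^m` there is a definable function `f : M^m → M^m` such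
that `(x, f x) ∈ E` for all `x`, and `(x, y) ∈ E ↔ f x = f y`. -/
theorem definablyWellOrdered_elimination_of_imaginaries (L : FirstOrder.Language) (M : Type*)
    [L.Structure M] [Nonempty M] (h : L.DefinablyWellOrdered M) (m : ℕ)
    (E : (Fin m → M) → (Fin m → M) → Prop) (hE : Equivalence E)
    (hEdef : (Set.univ : Set M).Definable L
      {z : (Fin m ⊕ Fin m) → M | E (fun i => z (Sum.inl i)) (fun i => z (Sum.inr i))}) :
    ∃ f : (Fin m → M) → (Fin m → M),
      (Set.univ : Set M).Definable L
        {z : (Fin m ⊕ Fin m) → M | (fun i => z (Sum.inr i)) = f (fun i => z (Sum.inl i))} ∧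
      (∀ x : Fin m → M, E x (f x)) ∧
      (∀ x y : Fin m → M, E x y ↔ f x = f y) := by
  classical
  obtain ⟨r, hr, hirr, htr, -, hmin⟩ := h
  have hcls : ∀ x : Fin m → M, (Set.univ : Set M).Definable L {y : Fin m → M | E x y} := by
    intro x
    have h1 : (Set.univ : Set M).Definable L _ := hEdef.inter
      (DWO.def_forall (L := L) fun i : Fin m =>
        DWO.def_eq_const (α := Fin m ⊕ Fin m) (Sum.inl i) (x i))
    have h2 := h1.image_comp (Sum.inr : Fin m → Fin m ⊕ Fin m)
    convert h2 using 1
    ext y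
    simp only [Set.mem_image, Set.mem_ofPred_eq, Set.mem_inter_iff]
    constructor
    · intro h
      exact ⟨Sum.elim x y, ⟨h, fun _ => rfl⟩, rfl⟩
    · rintro ⟨z, ⟨hz, hx⟩, rfl⟩
      rw [← funext hx]
      exact hz
  have hex := fun x => DWO.exists_least hmin _ (hcls x) ⟨x, hE.refl x⟩
  choose f hfE hfmin using hex
  have huniq : ∀ x y : Fin m → M, E x y → (∀ z, E x z → y = z ∨ DWO.lex r y z) → y = f x := by
    intro x y hxy hy
    rcases hy (f x) (hfE x) with h | h
    · exact h
    · rcases hfmin x y hxy with h' | h'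
      · exact h'.symm
      · exact (DWO.lex_asymm hirr htr h h').elim
  refine ⟨f, ?_, hfE, fun x y => ⟨fun hxy => ?_, fun hxy => ?_⟩⟩
  · have hbody : (Set.univ : Set M).Definable L
        {v : (Fin m ⊕ Fin m) ⊕ Fin m → M |
          ¬ E (fun i => v (Sum.inl (Sum.inl i))) (fun i => v (Sum.inr i)) ∨
          ((∀ i, v (Sum.inl (Sum.inr i)) = v (Sum.inr i)) ∨
            DWO.lex r (fun i => v (Sum.inl (Sum.inr i))) (fun i => v (Sum.inr i)))} := by
      refine Set.Definable.union ?_ (Set.Definable.union ?_ ?_)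
      · exact (hEdef.preimage_comp
          (Sum.elim (fun i => Sum.inl (Sum.inl i)) Sum.inr :
            Fin m ⊕ Fin m → (Fin m ⊕ Fin m) ⊕ Fin m)).compl
      · exact DWO.def_forall fun i => DWO.def_eq _ _
      · exact DWO.def_exists fun i =>
          Set.Definable.inter (DWO.def_forall fun j => DWO.def_eq _ _) (DWO.def_rel hr _ _)
    have hall := hEdef.inter hbody.forall_of_finite
    convert hall using 1
    ext z
    simp only [Set.mem_ofPred_eq, Set.mem_inter_iff, Sum.elim_inl, Sum.elim_inr]
    constructor
    · intro h
      rw [h]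
      refine ⟨hfE _, fun u => ?_⟩
      by_cases hu : E (fun i => z (Sum.inl i)) u
      · right
        rcases hfmin _ u hu with h' | h'
        · left; intro i; rw [← h', ← h]
        · right
          exact h'
      · left; exact hu
    · rintro ⟨h1, h2⟩
      refine huniq _ _ h1 fun u hu => ?_
      rcases h2 u with h | h | h
      · exact absurd hu h
      · left; exact funext h
      · right; exact h
  · exact huniq y (f x) (hE.trans (hE.symm hxy) (hfE x))
      fun z hz => hfmin x z (hE.trans hxy hz)
  · exact hE.trans (hfE x) (hxy ▸ hE.symm (hfE y))
end

section
/- The structure (ℤ, +, −, <, 0, 1) has definable choice: for every subset X ⊆ ℤ^m × ℤ^n definable with parameters in the first-order structure (ℤ, +, −, <, 0, 1), there exists a function f : ℤ^m → ℤ^n whose graph is definable with parameters in (ℤ, +, −, <, 0, 1), such that for every x ∈ ℤ^m with nonempty fiber X_x := {t ∈ ℤ^n : (x,t) ∈ X} one has (x, f(x)) ∈ X, and f(x) = f(y) whenever X_x = X_y. -/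
open FirstOrder FirstOrder.Language

/-- Function symbols of the Presburger language: `0`, `1`, `+`, `−`. -/
inductive PresburgerFunc : ℕ → Type
  | zero : PresburgerFunc 0
  | one : PresburgerFunc 0
  | add : PresburgerFunc 2
  | sub : PresburgerFunc 2

/-- Relation symbols of the Presburger language: `<`. -/
inductive PresburgerRel : ℕ → Type
  | lt : PresburgerRel 2

/-- The first-order language `(+, −, <, 0, 1)` of Presburger arithmetic. -/
def Presburger : FirstOrder.Language :=
  ⟨PresburgerFunc, PresburgerRel⟩

/-- The standard interpretation of `(+, −, <, 0, 1)` on `ℤ`. -/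
instance : Presburger.Structure ℤ where
  funMap {_} f v :=
    match f with
    | .zero => 0
    | .one => 1
    | .add => v 0 + v 1
    | .sub => v 0 - v 1
  RelMap {_} r v :=
    match r with
    | .lt => v 0 < v 1

/-- A definable well-order on the integers. -/
def zlt (a b : ℤ) : Prop := (0 ≤ a ∧ (a < b ∨ b < 0)) ∨ (a < 0 ∧ b < a)

theorem zlt_wf : WellFounded zlt := by
  have h : WellFounded (InvImage (Prod.Lex (· < ·) (· < ·))
      (fun a : ℤ => ((if a < 0 then 1 else 0 : ℕ), a.natAbs))) :=
    InvImage.wf _ (WellFounded.prod_lex wellFounded_lt wellFounded_lt)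
  refine Subrelation.wf ?_ h
  intro a b hab
  simp only [InvImage, Prod.lex_def]
  unfold zlt at hab
  split_ifs <;> omega

instance zlt_tri : Std.Trichotomous zlt where
  trichotomous a b h1 h2 := by
    unfold zlt at h1 h2
    omega

/-- Lexicographic order. -/
def vlt {n : ℕ} : (Fin n → ℤ) → (Fin n → ℤ) → Prop := Pi.Lex (· < ·) (fun {_} => zlt)

theorem vlt_wf (n : ℕ) : WellFounded (vlt (n := n)) :=
  Pi.Lex.wellFounded (s := fun _ => zlt) (· < ·) (fun _ => zlt_wf)

theorem vlt_tri {n : ℕ} (a b : Fin n → ℤ) (h1 : ¬ vlt a b) (h2 : ¬ vlt b a) : a = b :=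
  (Pi.trichotomous_lex (β := fun _ : Fin n => ℤ) (· < ·) (fun {_} => zlt)
    wellFounded_lt).trichotomous a b h1 h2

abbrev PD {α : Type} (s : Set (α → ℤ)) : Prop := (Set.univ : Set ℤ).Definable Presburger s

theorem pd_lt {α : Type} (i j : α) : PD {v : α → ℤ | v i < v j} := by
  refine Set.Definable.mono (A := ∅) ?_ (Set.empty_subset _)
  rw [Set.empty_definable_iff]
  refine ⟨Relations.formula₂ (L := Presburger) PresburgerRel.lt (Term.var i) (Term.var j), ?_⟩
  ext v
  simp only [Set.mem_ofPred_eq, Formula.realize_rel₂]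
  rfl

theorem pd_neg {α : Type} (i : α) : PD {v : α → ℤ | v i < 0} := by
  refine Set.Definable.mono (A := ∅) ?_ (Set.empty_subset _)
  rw [Set.empty_definable_iff]
  refine ⟨Relations.formula₂ (L := Presburger) PresburgerRel.lt (Term.var i)
    (Term.func (L := Presburger) (PresburgerFunc.zero) ![]), ?_⟩
  ext v
  simp only [Set.mem_ofPred_eq, Formula.realize_rel₂]
  rfl

theorem pd_pos {α : Type} (i : α) : PD {v : α → ℤ | 0 < v i} := by
  refine Set.Definable.mono (A := ∅) ?_ (Set.empty_subset _)
  rw [Set.empty_definable_iff]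
  refine ⟨Relations.formula₂ (L := Presburger) PresburgerRel.lt
    (Term.func (L := Presburger) (PresburgerFunc.zero) ![]) (Term.var i), ?_⟩
  ext v
  simp only [Set.mem_ofPred_eq, Formula.realize_rel₂]
  rfl

theorem pd_zero {α : Type} (i : α) : PD {v : α → ℤ | v i = 0} := by
  convert! ((pd_neg i).union (pd_pos i)).compl using 1
  ext v
  simp only [Set.mem_ofPred_eq, Set.mem_compl_iff, Set.mem_union]
  omega

theorem pd_eq {α : Type} (i j : α) : PD {v : α → ℤ | v i = v j} := by
  convert! ((pd_lt i j).union (pd_lt j i)).compl using 1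
  ext v
  simp only [Set.mem_ofPred_eq, Set.mem_compl_iff, Set.mem_union]
  omega

theorem pd_zlt {α : Type} (i j : α) : PD {v : α → ℤ | zlt (v i) (v j)} := by
  convert! ((pd_neg i).compl.inter ((pd_lt i j).union (pd_neg j))).union
    ((pd_neg i).inter (pd_lt j i)) using 1
  ext v
  simp only [Set.mem_ofPred_eq, Set.mem_compl_iff, Set.mem_union, Set.mem_inter_iff, zlt, not_lt]

theorem pd_vlt {α : Type} {n : ℕ} (p q : Fin n → α) :
    PD {v : α → ℤ | vlt (v ∘ p) (v ∘ q)} := by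
  have key : PD (⋃ i : Fin n, ((⋂ j : {j : Fin n // j < i}, {v : α → ℤ | v (p j) = v (q j)}) ∩
      {v : α → ℤ | zlt (v (p i)) (v (q i))})) :=
    Set.definable_iUnion_of_finite fun i =>
      (Set.definable_iInter_of_finite fun j => pd_eq _ _).inter (pd_zlt _ _)
  convert! key using 1
  ext v
  simp [vlt, Pi.Lex]

open Classical in
/-- Choice of the least element. -/
noncomputable def pick {n : ℕ} (S : Set (Fin n → ℤ)) : Fin n → ℤ :=
  if h : S.Nonempty then (vlt_wf n).min S h else 0

theorem pick_mem {n : ℕ} {S : Set (Fin n → ℤ)} (h : S.Nonempty) : pick S ∈ S := by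
  rw [pick, dif_pos h]
  exact (vlt_wf n).min_mem S h

theorem eq_pick_iff {n : ℕ} (S : Set (Fin n → ℤ)) (t : Fin n → ℤ) :
    t = pick S ↔ (t ∈ S ∧ ∀ u, ¬ (u ∈ S ∧ vlt u t)) ∨ ((∀ u, u ∉ S) ∧ ∀ i, t i = 0) := by
  by_cases h : S.Nonempty
  · have hm : ∀ u ∈ S, ¬ vlt u (pick S) := by
      intro u hu
      rw [pick, dif_pos h]
      exact (vlt_wf n).not_lt_min S hu
    constructor
    · rintro rfl
      exact Or.inl ⟨pick_mem h, fun u hu => hm u hu.1 hu.2⟩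
    · rintro (⟨h1, h2⟩ | ⟨h1, -⟩)
      · exact vlt_tri _ _ (hm t h1) (fun h3 => h2 _ ⟨pick_mem h, h3⟩)
      · exact absurd h.some_mem (h1 _)
  · have h' : ∀ u, u ∉ S := fun u hu => h ⟨u, hu⟩
    rw [pick, dif_neg h]
    simp [h', funext_iff]


/-- The structure `(ℤ, +, −, <, 0, 1)` has definable choice: for every `X ⊆ ℤ^m × ℤ^n`
definable with parameters there is a function `f : ℤ^m → ℤ^n` with definable graph such that
`(x, f x) ∈ X` whenever the fiber `X_x` is nonempty, and `f x = f y` whenever `X_x = X_y`. -/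
theorem presburger_definable_choice (m n : ℕ) (X : Set ((Fin m ⊕ Fin n) → ℤ))
    (hX : (Set.univ : Set ℤ).Definable Presburger X) :
    ∃ f : (Fin m → ℤ) → (Fin n → ℤ),
      (Set.univ : Set ℤ).Definable Presburger
        {z : (Fin m ⊕ Fin n) → ℤ | (fun i => z (Sum.inr i)) = f (fun i => z (Sum.inl i))} ∧
      (∀ x : Fin m → ℤ, {t : Fin n → ℤ | Sum.elim x t ∈ X}.Nonempty → Sum.elim x (f x) ∈ X) ∧
      (∀ x y : Fin m → ℤ,
        {t : Fin n → ℤ | Sum.elim x t ∈ X} = {t : Fin n → ℤ | Sum.elim y t ∈ X} → f x = f y) := by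
  refine ⟨fun x => pick {t : Fin n → ℤ | Sum.elim x t ∈ X}, ?_, fun x hx => pick_mem hx,
    fun x y h => by simp only [h]⟩
  have hS : PD {w : (Fin m ⊕ Fin n) ⊕ Fin n → ℤ |
      w ∘ (Sum.map Sum.inl id : Fin m ⊕ Fin n → (Fin m ⊕ Fin n) ⊕ Fin n) ∈ X} :=
    hX.preimage_comp _
  have hV : PD {w : (Fin m ⊕ Fin n) ⊕ Fin n → ℤ |
      vlt (w ∘ Sum.inr) (w ∘ (Sum.inl ∘ Sum.inr))} := pd_vlt _ _
  have h0 : PD (⋂ i : Fin n, {z : Fin m ⊕ Fin n → ℤ | z (Sum.inr i) = 0}) :=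
    Set.definable_iInter_of_finite fun i => pd_zero _
  convert! (hX.inter (hS.inter hV).compl.forall_of_finite).union
    (hS.compl.forall_of_finite.inter h0) using 1
  ext z
  have e1 : ∀ u : Fin n → ℤ, Sum.elim z u ∘
      (Sum.map Sum.inl id : Fin m ⊕ Fin n → (Fin m ⊕ Fin n) ⊕ Fin n) =
      Sum.elim (fun i => z (Sum.inl i)) u := by
    intro u
    ext (i | i) <;> rfl
  have e2 : Sum.elim (fun i => z (Sum.inl i)) (fun i => z (Sum.inr i)) = z := by
    ext (i | i) <;> rfl
  have e3 : ∀ u : Fin n → ℤ, Sum.elim z u ∘ (Sum.inl ∘ Sum.inr) = fun i => z (Sum.inr i) :=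
    fun u => rfl
  have e4 : ∀ u : Fin n → ℤ, Sum.elim z u ∘ Sum.inr = u := fun u => rfl
  simp only [Set.mem_ofPred_eq, Set.mem_union, Set.mem_inter_iff, Set.mem_compl_iff, Set.mem_iInter,
    eq_pick_iff, e1, e2, e3, e4]
end

section
/- Presburger arithmetic has elimination of imaginaries: for every equivalence relation E on ℤ^m whose graph is definable with parameters in the first-order structure (ℤ, +, −, <, 0, 1), there exists a function f : ℤ^m → ℤ^m whose graph is definable with parameters in (ℤ, +, −, <, 0, 1), such that for all x, y ∈ ℤ^m one has (x, f(x)) ∈ E, and (x, y) ∈ E if and only if f(x) = f(y). -/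
open FirstOrder FirstOrder.Language

/-- Injection of `ℤ` into `ℕ`. -/
def kap (a : ℤ) : ℕ := if 0 ≤ a then (2 * a).toNat else (-2 * a - 1).toNat

theorem kap_inj {a b : ℤ} (h : kap a = kap b) : a = b := by
  unfold kap at h; split_ifs at h <;> omega

theorem kap_lt (a b : ℤ) : kap a < kap b ↔
    (¬ a < 0 ∧ ¬ b < 0 ∧ a < b) ∨ (¬ a < 0 ∧ b < 0 ∧ a + b < 0) ∨
    (a < 0 ∧ ¬ b < 0 ∧ ¬ a + b < 0) ∨ (a < 0 ∧ b < 0 ∧ b < a) := by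
  unfold kap; split_ifs <;> omega

theorem def_neg {α : Type} (a : α) :
    (Set.univ : Set ℤ).Definable Presburger {w : α → ℤ | w a < 0} := by
  refine Set.Definable.mono (A := ∅) ?_ (Set.empty_subset _)
  rw [Set.empty_definable_iff]
  let z : Presburger.Term α := Constants.term (L := Presburger) PresburgerFunc.zero
  refine ⟨Relations.formula₂ (L := Presburger) PresburgerRel.lt (Term.var a) z, ?_⟩
  ext w
  rfl

theorem def_add_neg {α : Type} (a b : α) :
    (Set.univ : Set ℤ).Definable Presburger {w : α → ℤ | w a + w b < 0} := by
  refine Set.Definable.mono (A := ∅) ?_ (Set.empty_subset _)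
  rw [Set.empty_definable_iff]
  let z : Presburger.Term α := Constants.term (L := Presburger) PresburgerFunc.zero
  let t : Presburger.Term α := Functions.apply₂ (L := Presburger) PresburgerFunc.add
    (Term.var a) (Term.var b)
  refine ⟨Relations.formula₂ (L := Presburger) PresburgerRel.lt t z, ?_⟩
  ext w
  rfl

theorem def_lt {α : Type} (a b : α) :
    (Set.univ : Set ℤ).Definable Presburger {w : α → ℤ | w a < w b} := by
  refine Set.Definable.mono (A := ∅) ?_ (Set.empty_subset _)
  rw [Set.empty_definable_iff]
  refine ⟨Relations.formula₂ (L := Presburger) PresburgerRel.lt (Term.var a) (Term.var b), ?_⟩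
  ext w
  rfl

theorem def_kap {α : Type} (a b : α) :
    (Set.univ : Set ℤ).Definable Presburger {w : α → ℤ | kap (w a) < kap (w b)} := by
  have ha := def_neg a
  have hb := def_neg b
  have hs := def_add_neg a b
  have h1 := def_lt a b
  have h2 := def_lt b a
  have := (ha.compl.inter (hb.compl.inter h1)).union ((ha.compl.inter (hb.inter hs)).union
    ((ha.inter (hb.compl.inter hs.compl)).union (ha.inter (hb.inter h2))))
  convert this using 1
  ext w
  exact kap_lt _ _

theorem def_eq {α : Type} (a b : α) :
    (Set.univ : Set ℤ).Definable Presburger {w : α → ℤ | w a = w b} := by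
  convert (def_lt a b).compl.inter (def_lt b a).compl using 1
  ext w
  simp only [Set.mem_ofPred_eq, Set.mem_inter_iff, Set.mem_compl_iff]
  omega

/-- The lexicographic key of a vector. -/
def key {m : ℕ} (x : Fin m → ℤ) : Lex (Fin m → ℕ) := toLex fun i => kap (x i)

theorem key_inj {m : ℕ} {x y : Fin m → ℤ} (h : key x = key y) : x = y := by
  funext i
  exact kap_inj (congrFun (toLex.injective h) i)

theorem key_lt {m : ℕ} (x y : Fin m → ℤ) :
    key x < key y ↔ ∃ i, (∀ j, j < i → x j = y j) ∧ kap (x i) < kap (y i) := by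
  have : key x < key y ↔ ∃ i, (∀ j, j < i → kap (x j) = kap (y j)) ∧ kap (x i) < kap (y i) :=
    Iff.rfl
  rw [this]
  constructor
  · rintro ⟨i, h, h'⟩
    exact ⟨i, fun j hj => kap_inj (h j hj), h'⟩
  · rintro ⟨i, h, h'⟩
    exact ⟨i, fun j hj => by rw [h j hj], h'⟩

theorem def_key {α : Type} {m : ℕ} (a b : Fin m → α) :
    (Set.univ : Set ℤ).Definable Presburger
      {w : α → ℤ | key (fun i => w (a i)) < key (fun i => w (b i))} := by
  have := Set.definable_biUnion_finset (L := Presburger) (A := (Set.univ : Set ℤ))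
    (f := fun i : Fin m => (⋂ j ∈ Finset.univ.filter (· < i), {w : α → ℤ | w (a j) = w (b j)}) ∩
      {w : α → ℤ | kap (w (a i)) < kap (w (b i))})
    (fun i => (Set.definable_biInter_finset (fun j => def_eq (a j) (b j)) _).inter
      (def_kap (a i) (b i))) Finset.univ
  convert this using 1
  ext w
  simp [key_lt]

/-- Presburger arithmetic has elimination of imaginaries: for every equivalence relation `E` on
`ℤ^m` whose graph is definable with parameters in `(ℤ, +, −, <, 0, 1)` there is a function
`f : ℤ^m → ℤ^m` with definable graph such that `(x, f x) ∈ E` for all `x`, and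
`(x, y) ∈ E ↔ f x = f y`. -/
theorem presburger_elimination_of_imaginaries (m : ℕ)
    (E : (Fin m → ℤ) → (Fin m → ℤ) → Prop) (hE : Equivalence E)
    (hEdef : (Set.univ : Set ℤ).Definable Presburger
      {z : (Fin m ⊕ Fin m) → ℤ | E (fun i => z (Sum.inl i)) (fun i => z (Sum.inr i))}) :
    ∃ f : (Fin m → ℤ) → (Fin m → ℤ),
      (Set.univ : Set ℤ).Definable Presburger
        {z : (Fin m ⊕ Fin m) → ℤ | (fun i => z (Sum.inr i)) = f (fun i => z (Sum.inl i))} ∧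
      (∀ x : Fin m → ℤ, E x (f x)) ∧
      (∀ x y : Fin m → ℤ, E x y ↔ f x = f y) := by
  classical
  have wf : WellFounded (fun x y : Fin m → ℤ => key x < key y) :=
    InvImage.wf key (wellFounded_lt (α := Lex (Fin m → ℕ)))
  have hne : ∀ x, ({y | E x y} : Set (Fin m → ℤ)).Nonempty := fun x => ⟨x, hE.refl x⟩
  have hmem : ∀ x, E x (wf.min _ (hne x)) := fun x => wf.min_mem _ (hne x)
  have hmin : ∀ x y, E x y → ¬ key y < key (wf.min _ (hne x)) :=
    fun x y h => wf.not_lt_min {y | E x y} h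
  refine ⟨fun x => wf.min _ (hne x), ?_, hmem, ?_⟩
  · have h1 := hEdef.preimage_comp
      (Sum.elim (fun i => Sum.inl (Sum.inl i)) Sum.inr : Fin m ⊕ Fin m → (Fin m ⊕ Fin m) ⊕ Fin m)
    have h2 := def_key (α := (Fin m ⊕ Fin m) ⊕ Fin m) (m := m) Sum.inr
      (fun i => Sum.inl (Sum.inr i))
    have h3 := (h1.inter h2).image_comp_sumInl_fin m
    convert hEdef.inter h3.compl using 1
    ext z
    simp only [Set.mem_ofPred_eq, Set.mem_inter_iff, Set.mem_compl_iff]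
    constructor
    · intro h
      rw [h]
      refine ⟨hmem _, ?_⟩
      rintro ⟨w, ⟨hw1, hw2⟩, rfl⟩
      refine hmin _ _ hw1 ?_
      exact lt_of_lt_of_eq hw2 (congrArg key h)
    · rintro ⟨hz, hn⟩
      refine key_inj (le_antisymm (not_lt.1 fun hlt => hn ?_) (not_lt.1 (hmin _ _ hz)))
      exact ⟨Sum.elim z (wf.min _ (hne fun i => z (Sum.inl i))), ⟨hmem _, hlt⟩, rfl⟩
  · intro x y
    constructor
    · intro h
      have : {z | E x z} = {z | E y z} := by
        ext z
        exact ⟨fun hz => hE.trans (hE.symm h) hz, fun hz => hE.trans h hz⟩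
      simp only [this]
    · intro h
      have h' : wf.min _ (hne x) = wf.min _ (hne y) := h
      have := hmem x
      rw [h'] at this
      exact hE.trans this (hE.symm (hmem y))
end
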